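/- Let (Y₁, μ₁) and (Y₂, μ₂) be measurable spaces with σ-finite measures, and let {f(·,·;θ) : θ ∈ Θ} be a family of probability density functions on Y₁ × Y₂ with respect to the product measure μ₁ ⊗ μ₂ which is complete. For each θ define the marginal density f₁(y₁;θ) = ∫ f(y₁,y₂;θ) dμ₂(y₂). Then the family of marginal densities {f₁(·;θ) : θ ∈ Θ} on Y₁ is complete with respect to μ₁. -/

import Mathlib

open MeasureTheory

/-!
Completeness of a family of densities is completeness of the family of measures it defines, and the
latter passes to the image under any measurable map: a test function `t` on the target pulls back to
the test function `t ∘ T` with the same integrals. Taking a marginal density amounts to taking the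
image under the first projection.
-/

/-- A family of measures is complete if every measurable, integrable real function whose integral
against each member is zero vanishes almost everywhere for each member. This is the density-free
form of completeness. -/
def IsCompleteFamily {Y Θ : Type*} [MeasurableSpace Y] (P : Θ → Measure Y) : Prop :=
  ∀ t : Y → ℝ, Measurable t → (∀ θ, Integrable t (P θ)) → (∀ θ, ∫ y, t y ∂P θ = 0) →
    ∀ θ, ∀ᵐ y ∂P θ, t y = 0

/-- Completeness of a family of real densities `f θ` with respect to a common measure `μ`. The
conditions that make `f θ` a probability density are kept outside the definition. -/
def IsCompleteDensityFamily {Y Θ : Type*} [MeasurableSpace Y] (μ : Measure Y) (f : Θ → Y → ℝ) :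
    Prop :=
  ∀ t : Y → ℝ, Measurable t → (∀ θ, Integrable (fun y => t y * f θ y) μ) →
    (∀ θ, ∫ y, t y * f θ y ∂μ = 0) → ∀ θ, ∀ᵐ y ∂μ, t y * f θ y = 0

theorem IsCompleteFamily.map {Y Z Θ : Type*} [MeasurableSpace Y] [MeasurableSpace Z]
    {P : Θ → Measure Y} (hP : IsCompleteFamily P) {T : Y → Z} (hT : Measurable T) :
    IsCompleteFamily fun θ => (P θ).map T := by
  intro t ht t_integrable t_integral θ
  have pullback_integrable (θ) : Integrable (t ∘ T) (P θ) :=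
    (t_integrable θ).comp_measurable hT
  have pullback_integral (θ) : ∫ y, (t ∘ T) y ∂P θ = 0 :=
    (integral_map hT.aemeasurable ht.aestronglyMeasurable).symm.trans (t_integral θ)
  exact (ae_map_iff hT.aemeasurable (ht (measurableSet_singleton 0))).2
    (hP (t ∘ T) (ht.comp hT) pullback_integrable pullback_integral θ)

section RealDensity

variable {Y : Type*} [MeasurableSpace Y] {μ : Measure Y} {f : Y → ℝ}

theorem toReal_ofReal_smul_ae_eq_mul (hf_nonneg : 0 ≤ᵐ[μ] f) (t : Y → ℝ) :
    (fun y => (ENNReal.ofReal (f y)).toReal • t y) =ᵐ[μ] fun y => t y * f y := by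
  filter_upwards [hf_nonneg] with y hy
  rw [ENNReal.toReal_ofReal hy, smul_eq_mul, mul_comm]

theorem integrable_withDensity_ofReal_iff (hf : AEMeasurable f μ) (hf_nonneg : 0 ≤ᵐ[μ] f)
    {t : Y → ℝ} :
    Integrable t (μ.withDensity fun y => ENNReal.ofReal (f y)) ↔
      Integrable (fun y => t y * f y) μ := by
  rw [integrable_withDensity_iff_integrable_smul₀' hf.ennreal_ofReal
    (.of_forall fun _ => ENNReal.ofReal_lt_top)]
  exact integrable_congr (toReal_ofReal_smul_ae_eq_mul hf_nonneg t)

theorem integral_withDensity_ofReal (hf : AEMeasurable f μ) (hf_nonneg : 0 ≤ᵐ[μ] f)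
    (t : Y → ℝ) :
    ∫ y, t y ∂μ.withDensity (fun y => ENNReal.ofReal (f y)) = ∫ y, t y * f y ∂μ := by
  rw [integral_withDensity_eq_integral_toReal_smul₀ hf.ennreal_ofReal
    (.of_forall fun _ => ENNReal.ofReal_lt_top)]
  exact integral_congr_ae (toReal_ofReal_smul_ae_eq_mul hf_nonneg t)

theorem ae_withDensity_ofReal_eq_zero_iff (hf : AEMeasurable f μ) (hf_nonneg : 0 ≤ᵐ[μ] f)
    {t : Y → ℝ} :
    (∀ᵐ y ∂μ.withDensity (fun y => ENNReal.ofReal (f y)), t y = 0) ↔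
      ∀ᵐ y ∂μ, t y * f y = 0 := by
  rw [ae_withDensity_iff' hf.ennreal_ofReal]
  refine Filter.eventually_congr ?_
  filter_upwards [hf_nonneg] with y hy
  have ofReal_eq_zero : ENNReal.ofReal (f y) = 0 ↔ f y = 0 :=
    ENNReal.ofReal_eq_zero.trans (LE.le.ge_iff_eq' hy)
  rw [Ne, ofReal_eq_zero, mul_eq_zero, or_comm, or_iff_not_imp_left]

end RealDensity

theorem isCompleteFamily_withDensity_ofReal_iff {Y Θ : Type*} [MeasurableSpace Y] {μ : Measure Y}
    {f : Θ → Y → ℝ} (hf : ∀ θ, AEMeasurable (f θ) μ) (hf_nonneg : ∀ θ, 0 ≤ᵐ[μ] f θ) :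
    IsCompleteFamily (fun θ => μ.withDensity fun y => ENNReal.ofReal (f θ y)) ↔
      IsCompleteDensityFamily μ f := by
  simp only [IsCompleteFamily, IsCompleteDensityFamily,
    integrable_withDensity_ofReal_iff (hf _) (hf_nonneg _),
    integral_withDensity_ofReal (hf _) (hf_nonneg _),
    ae_withDensity_ofReal_eq_zero_iff (hf _) (hf_nonneg _)]

section Marginal

variable {Y₁ Y₂ : Type*} [MeasurableSpace Y₁] [MeasurableSpace Y₂]
  {μ₁ : Measure Y₁} {μ₂ : Measure Y₂} [SFinite μ₂]

theorem map_fst_withDensity_prod [SFinite μ₁] {g : Y₁ × Y₂ → ENNReal}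
    (hg : AEMeasurable g (μ₁.prod μ₂)) :
    ((μ₁.prod μ₂).withDensity g).map Prod.fst =
      μ₁.withDensity fun y₁ => ∫⁻ y₂, g (y₁, y₂) ∂μ₂ := by
  ext s hs
  have restrict_preimage :
      (μ₁.prod μ₂).restrict (Prod.fst ⁻¹' s) = (μ₁.restrict s).prod μ₂ := by
    rw [← Set.prod_univ, ← Measure.prod_restrict, Measure.restrict_univ]
  rw [Measure.map_apply measurable_fst hs, withDensity_apply _ (measurable_fst hs),
    withDensity_apply _ hs, restrict_preimage, lintegral_prod _ (restrict_preimage ▸ hg.restrict)]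

theorem map_fst_withDensity_ofReal [SFinite μ₁] {f : Y₁ × Y₂ → ℝ}
    (hf : AEMeasurable f (μ₁.prod μ₂)) (hf_nonneg : 0 ≤ᵐ[μ₁.prod μ₂] f)
    (hf_sections : ∀ᵐ y₁ ∂μ₁, Integrable (fun y₂ => f (y₁, y₂)) μ₂) :
    ((μ₁.prod μ₂).withDensity fun y => ENNReal.ofReal (f y)).map Prod.fst =
      μ₁.withDensity fun y₁ => ENNReal.ofReal (∫ y₂, f (y₁, y₂) ∂μ₂) := by
  rw [map_fst_withDensity_prod hf.ennreal_ofReal]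
  refine withDensity_congr_ae ?_
  filter_upwards [hf_sections, Measure.ae_ae_of_ae_prod hf_nonneg] with y₁ integrable nonneg
  exact (ofReal_integral_eq_lintegral_ofReal integrable nonneg).symm

theorem marginal_nonneg_ae {f : Y₁ × Y₂ → ℝ} (hf_nonneg : 0 ≤ᵐ[μ₁.prod μ₂] f) :
    0 ≤ᵐ[μ₁] fun y₁ => ∫ y₂, f (y₁, y₂) ∂μ₂ := by
  filter_upwards [Measure.ae_ae_of_ae_prod hf_nonneg] with y₁ nonneg
  exact integral_nonneg_of_ae nonneg

theorem marginal_complete_general [SFinite μ₁] {Θ : Type*} {f : Θ → Y₁ × Y₂ → ℝ}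
    (hf : ∀ θ, AEMeasurable (f θ) (μ₁.prod μ₂))
    (hf_nonneg : ∀ θ, 0 ≤ᵐ[μ₁.prod μ₂] f θ)
    (hf_sections : ∀ θ, ∀ᵐ y₁ ∂μ₁, Integrable (fun y₂ => f θ (y₁, y₂)) μ₂)
    (hf_complete : IsCompleteDensityFamily (μ₁.prod μ₂) f) :
    IsCompleteDensityFamily μ₁ fun θ y₁ => ∫ y₂, f θ (y₁, y₂) ∂μ₂ := by
  have marginal_aemeasurable (θ) : AEMeasurable (fun y₁ => ∫ y₂, f θ (y₁, y₂) ∂μ₂) μ₁ :=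
    (hf θ).aestronglyMeasurable.integral_prod_right'.aemeasurable
  have joint_complete := (isCompleteFamily_withDensity_ofReal_iff hf hf_nonneg).2 hf_complete
  rw [← isCompleteFamily_withDensity_ofReal_iff marginal_aemeasurable
    fun θ => marginal_nonneg_ae (hf_nonneg θ)]
  simpa only [map_fst_withDensity_ofReal (hf _) (hf_nonneg _) (hf_sections _)] using
    joint_complete.map measurable_fst

end Marginal

/-- **Lemma 3.1(a)** (Lu–Copas): completeness of a joint density family on a product space
is inherited by the family of marginal densities of the first component. -/
theorem marginal_complete
    {Y₁ Y₂ : Type*} [MeasurableSpace Y₁] [MeasurableSpace Y₂]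
    (μ₁ : Measure Y₁) (μ₂ : Measure Y₂) [SigmaFinite μ₁] [SigmaFinite μ₂]
    {Θ : Type*} (f : Θ → Y₁ × Y₂ → ℝ)
    (hf_meas : ∀ θ, Measurable (f θ))
    (hf_nonneg : ∀ θ y, 0 ≤ f θ y)
    (hf_int : ∀ θ, ∫ y, f θ y ∂(μ₁.prod μ₂) = 1)
    -- completeness of the joint family {f(·;θ) : θ ∈ Θ}
    (hf_complete : ∀ t : Y₁ × Y₂ → ℝ, Measurable t →
      (∀ θ, Integrable (fun y => t y * f θ y) (μ₁.prod μ₂)) →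
      (∀ θ, ∫ y, t y * f θ y ∂(μ₁.prod μ₂) = 0) →
      ∀ θ, ∀ᵐ y ∂(μ₁.prod μ₂), t y * f θ y = 0) :
    -- the marginal family f₁(y₁;θ) = ∫ f(y₁,y₂;θ) dμ₂(y₂) is complete
    ∀ t : Y₁ → ℝ, Measurable t →
      (∀ θ, Integrable (fun y₁ => t y₁ * ∫ y₂, f θ (y₁, y₂) ∂μ₂) μ₁) →
      (∀ θ, ∫ y₁, t y₁ * ∫ y₂, f θ (y₁, y₂) ∂μ₂ ∂μ₁ = 0) →
      ∀ θ, ∀ᵐ y₁ ∂μ₁, t y₁ * ∫ y₂, f θ (y₁, y₂) ∂μ₂ = 0 := by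
  have hf_integrable (θ) : Integrable (f θ) (μ₁.prod μ₂) :=
    .of_integral_ne_zero ((hf_int θ).trans_ne one_ne_zero)
  exact marginal_complete_general (fun θ => (hf_meas θ).aemeasurable)
    (fun θ => .of_forall (hf_nonneg θ)) (fun θ => (hf_integrable θ).prod_right_ae) hf_complete
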